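/- Let X be a T0 Alexandroff space in which every chain of the specialization order is finite and which has no beat points. If f : X → X is a continuous map such that either f(x) ≤ x for all x ∈ X, or f(x) ≥ x for all x ∈ X, then f = id_X. Consequently, every continuous retraction r : X → X with r(x) ∼ x for all x is the identity. -/

import Mathlib

/-- Specialization order on a topological space: `x ≤ y` iff `y ∈ closure {x}`. -/
def specLE {X : Type*} [TopologicalSpace X] (x y : X) : Prop := y ∈ closure ({x} : Set X)

/-- Comparability in the specialization order. -/
def specComp {X : Type*} [TopologicalSpace X] (x y : X) : Prop := specLE x y ∨ specLE y x

/-- `x` is an up-beat point: the set of points strictly above `x` has a smallest element. -/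
def IsUpBeat {X : Type*} [TopologicalSpace X] (x : X) : Prop :=
  ∃ u, (specLE x u ∧ u ≠ x) ∧ ∀ y, specLE x y → y ≠ x → specLE u y

/-- `x` is a down-beat point: the set of points strictly below `x` has a largest element. -/
def IsDownBeat {X : Type*} [TopologicalSpace X] (x : X) : Prop :=
  ∃ d, (specLE d x ∧ d ≠ x) ∧ ∀ y, specLE y x → y ≠ x → specLE y d

/-!
Let `f` be monotone with `f x` comparable to `x` for every `x`. Since chains are finite, `<` is
well-founded, and `x ≤ f x` follows by induction: otherwise `f x < x`, and every `y < x` satisfies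
`y ≤ f y ≤ f x`, so `f x` is the largest point strictly below `x` and `x` is a down-beat point. The
dual argument gives `f x ≤ x`.
-/

section Order

variable {P : Type*}

theorem wellFoundedLT_of_forall_isChain_finite [Preorder P]
    (hchain : ∀ C : Set P, IsChain (· ≤ ·) C → C.Finite) : WellFoundedLT P :=
  Set.isWF_univ_iff.1 <| Set.isWF_iff_no_descending_seq.2 fun _ hs _ ↦
    Set.infinite_range_of_injective hs.injective (hchain _ hs.antitone.isChain_range)

theorem wellFoundedGT_of_forall_isChain_finite [Preorder P]
    (hchain : ∀ C : Set P, IsChain (· ≤ ·) C → C.Finite) : WellFoundedGT P :=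
  (wellFoundedLT_dual_iff P).1 <|
    wellFoundedLT_of_forall_isChain_finite (P := Pᵒᵈ) fun C hC ↦ hchain C hC.symm

theorem le_apply_of_monotone_of_comparable [Preorder P] [WellFoundedLT P] {f : P → P}
    (hbeat : ∀ x d : P, ¬ IsGreatest (Set.Iio x) d) (hf : Monotone f)
    (hcomp : ∀ x, f x ≤ x ∨ x ≤ f x) (x : P) : x ≤ f x := by
  induction x using WellFoundedLT.induction with
  | _ x ih =>
    by_contra hx
    have hlt : f x < x := lt_of_le_not_ge ((hcomp x).resolve_right hx) hx
    exact hbeat x (f x) ⟨hlt, fun y hy ↦ (ih y hy).trans (hf (le_of_lt hy))⟩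

theorem eq_id_of_monotone_of_comparable [PartialOrder P] [WellFoundedLT P] [WellFoundedGT P]
    {f : P → P} (hdown : ∀ x d : P, ¬ IsGreatest (Set.Iio x) d)
    (hup : ∀ x u : P, ¬ IsLeast (Set.Ioi x) u) (hf : Monotone f)
    (hcomp : ∀ x, f x ≤ x ∨ x ≤ f x) : f = id := by
  funext x
  have hge : x ≤ f x := le_apply_of_monotone_of_comparable hdown hf hcomp x
  have hle : f x ≤ x :=
    le_apply_of_monotone_of_comparable (P := Pᵒᵈ) hup hf.dual (fun y ↦ (hcomp y).symm) x
  exact le_antisymm hle hge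

end Order

section Specialization

variable {X : Type*} [TopologicalSpace X] {x y : X}

theorem specLE_iff_specializes : specLE x y ↔ x ⤳ y :=
  specializes_iff_mem_closure.symm

theorem specLE.map {Y : Type*} [TopologicalSpace Y] {f : X → Y} (h : specLE x y)
    (hf : Continuous f) : specLE (f x) (f y) :=
  specLE_iff_specializes.2 <| (specLE_iff_specializes.1 h).map hf

variable [T0Space X]

attribute [local instance] specializationOrder

-- Mathlib's `specializationOrder` is the opposite of `specLE`, so up-beat and down-beat points
-- trade places below.
theorem specLE_iff_ge : specLE x y ↔ y ≤ x :=
  specLE_iff_specializes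

theorem specComp_iff_le_or_ge : specComp x y ↔ x ≤ y ∨ y ≤ x := by
  rw [specComp, specLE_iff_ge, specLE_iff_ge, or_comm]

theorem isUpBeat_iff_exists_isGreatest_Iio : IsUpBeat x ↔ ∃ u, IsGreatest (Set.Iio x) u := by
  simp only [IsUpBeat, specLE_iff_ge, IsGreatest, mem_upperBounds, Set.mem_Iio, lt_iff_le_and_ne,
    and_imp]

theorem isDownBeat_iff_exists_isLeast_Ioi : IsDownBeat x ↔ ∃ d, IsLeast (Set.Ioi x) d := by
  simp only [IsDownBeat, specLE_iff_ge, IsLeast, mem_lowerBounds, Set.mem_Ioi, lt_iff_le_and_ne',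
    and_imp]

theorem stmt16_general
    (hchain : ∀ C : Set X, (∀ a ∈ C, ∀ b ∈ C, a ≠ b → specComp a b) → C.Finite)
    (hbeat : ∀ x : X, ¬ IsUpBeat x ∧ ¬ IsDownBeat x) {f : X → X}
    (hf : ∀ x y, specLE x y → specLE (f x) (f y)) (hcomp : ∀ x, specComp (f x) x) : f = id := by
  have hchain' (C : Set X) (hC : IsChain (· ≤ ·) C) : C.Finite :=
    hchain C fun _ ha _ hb hne ↦ specComp_iff_le_or_ge.2 (hC ha hb hne)
  have := wellFoundedLT_of_forall_isChain_finite hchain'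
  have := wellFoundedGT_of_forall_isChain_finite hchain'
  have hIio (x u : X) (hu : IsGreatest (Set.Iio x) u) : False :=
    (hbeat x).1 (isUpBeat_iff_exists_isGreatest_Iio.2 ⟨u, hu⟩)
  have hIoi (x d : X) (hd : IsLeast (Set.Ioi x) d) : False :=
    (hbeat x).2 (isDownBeat_iff_exists_isLeast_Ioi.2 ⟨d, hd⟩)
  have hmono : Monotone f := fun _ _ h ↦ specLE_iff_ge.1 (hf _ _ (specLE_iff_ge.2 h))
  exact eq_id_of_monotone_of_comparable hIio hIoi hmono fun x ↦ specComp_iff_le_or_ge.1 (hcomp x)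

end Specialization

/-- In a T0 Alexandroff space with all chains finite and no beat points, any continuous
self-map comparable to the identity (everywhere below it, or everywhere above it) is the
identity; consequently every comparative retraction is the identity. -/
theorem stmt16 {X : Type*} [TopologicalSpace X] [AlexandrovDiscrete X] [T0Space X]
    (hchain : ∀ C : Set X, (∀ a ∈ C, ∀ b ∈ C, a ≠ b → specComp a b) → C.Finite)
    (hbeat : ∀ x : X, ¬ IsUpBeat x ∧ ¬ IsDownBeat x) :
    (∀ f : X → X, Continuous f →
        ((∀ x, specLE (f x) x) ∨ (∀ x, specLE x (f x))) → f = id) ∧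
      ∀ r : X → X, Continuous r → r ∘ r = r → (∀ x, specComp (r x) x) → r = id := by
  constructor
  · intro f hf h
    exact stmt16_general hchain hbeat (fun _ _ hxy ↦ hxy.map hf) fun x ↦ h.imp (· x) (· x)
  · intro r hr _ hcomp
    exact stmt16_general hchain hbeat (fun _ _ hxy ↦ hxy.map hr) hcomp
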